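/- Let L be a bounded distributive lattice. A function f : L^n → L is a lattice polynomial function if and only if for every x ∈ L^n, f(x) = ⋁_{I ⊆ [n]} (f(e_I) ∧ ⋀_{i ∈ I} x_i), where e_I ∈ L^n is the characteristic vector of I. -/

import Mathlib

/-- Lattice polynomial functions: the smallest class of functions `L^n → L`
containing the projections and the constant functions and closed under
pointwise joins and meets. -/
inductive IsLatticePolynomial {L : Type*} [Lattice L] {n : ℕ} : ((Fin n → L) → L) → Prop
  | proj (i : Fin n) : IsLatticePolynomial (fun x => x i)
  | const (c : L) : IsLatticePolynomial (fun _ => c)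
  | sup {f g : (Fin n → L) → L} : IsLatticePolynomial f → IsLatticePolynomial g →
      IsLatticePolynomial (fun x => f x ⊔ g x)
  | inf {f g : (Fin n → L) → L} : IsLatticePolynomial f → IsLatticePolynomial g →
      IsLatticePolynomial (fun x => f x ⊓ g x)

theorem IsLatticePolynomial.mono_aux {L : Type*} [Lattice L] {n : ℕ} {f : (Fin n → L) → L}
    (hf : IsLatticePolynomial f) : Monotone f := by
  induction hf with
  | proj i => exact fun x y h => h i
  | const c => exact fun x y _ => le_rfl
  | sup _ _ hf hg => exact fun x y h => sup_le_sup (hf h) (hg h)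
  | inf _ _ hf hg => exact fun x y h => inf_le_inf (hf h) (hg h)

theorem IsLatticePolynomial.finset_sup_aux {L : Type*} [Lattice L] [BoundedOrder L] {n : ℕ}
    {ι : Type*} (s : Finset ι) (F : ι → (Fin n → L) → L) (h : ∀ i, IsLatticePolynomial (F i)) :
    IsLatticePolynomial (fun x => s.sup (fun i => F i x)) := by
  classical
  induction s using Finset.induction_on with
  | empty => simpa using IsLatticePolynomial.const (⊥ : L)
  | insert a s _ ih => simpa only [Finset.sup_insert] using (h a).sup ih

theorem IsLatticePolynomial.finset_inf_aux {L : Type*} [Lattice L] [BoundedOrder L] {n : ℕ}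
    {ι : Type*} (s : Finset ι) (F : ι → (Fin n → L) → L) (h : ∀ i, IsLatticePolynomial (F i)) :
    IsLatticePolynomial (fun x => s.inf (fun i => F i x)) := by
  classical
  induction s using Finset.induction_on with
  | empty => simpa using IsLatticePolynomial.const (⊤ : L)
  | insert a s _ ih => simpa only [Finset.inf_insert] using (h a).inf ih

/-- Goodstein's canonical DNF representation: `f : L^n → L` is a lattice
polynomial function if and only if
`f(x) = ⋁_{I ⊆ [n]} (f(e_I) ∧ ⋀_{i ∈ I} x_i)` for all `x`, where `e_I` is
the characteristic vector of `I`. -/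
theorem isLatticePolynomial_iff_canonical_DNF {L : Type*} [DistribLattice L]
    [BoundedOrder L] {n : ℕ} (f : (Fin n → L) → L) :
    IsLatticePolynomial f ↔
      ∀ x : Fin n → L,
        f x = (Finset.univ : Finset (Finset (Fin n))).sup
          (fun I => f (fun i => if i ∈ I then ⊤ else ⊥) ⊓ I.inf (fun i => x i)) := by
  constructor
  · intro hf
    induction hf with
    | proj i =>
      intro x
      apply le_antisymm
      · refine le_trans ?_ (Finset.le_sup (Finset.mem_univ ({i} : Finset (Fin n))))
        simp
      · refine Finset.sup_le fun I _ => ?_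
        by_cases h : i ∈ I
        · exact inf_le_right.trans (Finset.inf_le h)
        · simp [h]
    | const c =>
      intro x
      apply le_antisymm
      · refine le_trans ?_ (Finset.le_sup (Finset.mem_univ (∅ : Finset (Fin n))))
        simp
      · exact Finset.sup_le fun I _ => inf_le_left
    | sup _ _ hf hg =>
      intro x
      simp only [inf_sup_right]
      rw [hf x, hg x]
      exact Finset.sup_sup.symm
    | @inf f g pf pg hf hg =>
      intro x
      apply le_antisymm
      · beta_reduce
        rw [hf x, hg x, Finset.sup_inf_sup]
        refine Finset.sup_le fun p _ => ?_
        refine le_trans ?_ (Finset.le_sup (Finset.mem_univ (p.1 ∪ p.2)))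
        have key : ∀ I : Finset (Fin n), I ⊆ p.1 ∪ p.2 →
            (fun i => if i ∈ I then (⊤ : L) else ⊥) ≤
              (fun i => if i ∈ p.1 ∪ p.2 then (⊤ : L) else ⊥) := by
          intro I hI i
          by_cases h : i ∈ I
          · have h2 := hI h
            simp only [h2, if_true, le_top]
          · simp only [h, if_false, bot_le]
        have h1 := pf.mono_aux (key p.1 Finset.subset_union_left)
        have h2 := pg.mono_aux (key p.2 Finset.subset_union_right)
        rw [Finset.inf_union]
        exact le_inf (inf_le_inf (inf_le_left.trans h1) (inf_le_left.trans h2))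
          (inf_le_inf inf_le_right inf_le_right)
      · refine Finset.sup_le fun I hI => le_inf ?_ ?_
        · rw [hf x]
          exact le_trans (inf_le_inf_right _ inf_le_left) (Finset.le_sup (f := fun I => f (fun i => if i ∈ I then ⊤ else ⊥) ⊓ I.inf (fun i => x i)) hI)
        · rw [hg x]
          exact le_trans (inf_le_inf_right _ inf_le_right) (Finset.le_sup (f := fun I => g (fun i => if i ∈ I then ⊤ else ⊥) ⊓ I.inf (fun i => x i)) hI)
  · intro h
    rw [funext h]
    exact IsLatticePolynomial.finset_sup_aux _ _ fun I =>
      (IsLatticePolynomial.const _).inf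
        (IsLatticePolynomial.finset_inf_aux I (fun i x => x i) fun i => .proj i)
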